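/- Fix μ > 0, ȳ ∈ ℝ^m and ξ ≥ 0, and let x* be an optimal solution of (P), i.e. x* ∈ χ, Ax* − b ∈ K and p(x*) = p*. If x̄ ∈ χ satisfies L_μ(x̄, ȳ) ≤ L_μ(x*, ȳ) + ξ, then p(x̄) + (μ/2)·d_K(Ax̄ − b − ȳ/μ)² ≤ p* + ξ + ‖ȳ‖₂²/(2μ); in particular p(x̄) − p* ≤ ξ + ‖ȳ‖₂²/(2μ). -/

import Mathlib

open RealInnerProductSpace Metric

/-- The dual cone `K* = {y : ⟪y, s⟫ ≥ 0 for all s ∈ K}`. -/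
def dualCone {m : ℕ} (K : Set (EuclideanSpace ℝ (Fin m))) :
    Set (EuclideanSpace ℝ (Fin m)) :=
  {y | ∀ s ∈ K, 0 ≤ ⟪y, s⟫}

/-- The penalty Lagrangian
`L_μ(x, y) = p(x) + (μ/2)·d_K(Ax - b - y/μ)² - ‖y‖²/(2μ)`. -/
noncomputable def Lpen {n m : ℕ}
    (A : EuclideanSpace ℝ (Fin n) →L[ℝ] EuclideanSpace ℝ (Fin m))
    (b : EuclideanSpace ℝ (Fin m)) (K : Set (EuclideanSpace ℝ (Fin m)))
    (p : EuclideanSpace ℝ (Fin n) → ℝ) (μ : ℝ)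
    (x : EuclideanSpace ℝ (Fin n)) (y : EuclideanSpace ℝ (Fin m)) : ℝ :=
  p x + μ / 2 * (infDist (A x - b - μ⁻¹ • y) K) ^ 2 - ‖y‖ ^ 2 / (2 * μ)

/-- `g_μ(y) = inf_{x ∈ χ} L_μ(x, y)`. -/
noncomputable def gmu {n m : ℕ}
    (A : EuclideanSpace ℝ (Fin n) →L[ℝ] EuclideanSpace ℝ (Fin m))
    (b : EuclideanSpace ℝ (Fin m)) (K : Set (EuclideanSpace ℝ (Fin m)))
    (χ : Set (EuclideanSpace ℝ (Fin n)))
    (p : EuclideanSpace ℝ (Fin n) → ℝ) (μ : ℝ) (y : EuclideanSpace ℝ (Fin m)) : ℝ :=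
  sInf ((fun x => Lpen A b K p μ x y) '' χ)

/-- The Lagrangian dual function `g₀(z) = inf_{x ∈ χ} { p(x) - ⟪z, Ax - b⟫ }`. -/
noncomputable def gzero {n m : ℕ}
    (A : EuclideanSpace ℝ (Fin n) →L[ℝ] EuclideanSpace ℝ (Fin m))
    (b : EuclideanSpace ℝ (Fin m)) (χ : Set (EuclideanSpace ℝ (Fin n)))
    (p : EuclideanSpace ℝ (Fin n) → ℝ) (z : EuclideanSpace ℝ (Fin m)) : ℝ :=
  sInf ((fun x => p x - ⟪z, A x - b⟫) '' χ)

/-- The optimal value `p* = inf { p(x) : x ∈ χ, Ax - b ∈ K }` of the conic program (P). -/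
noncomputable def pstar {n m : ℕ}
    (A : EuclideanSpace ℝ (Fin n) →L[ℝ] EuclideanSpace ℝ (Fin m))
    (b : EuclideanSpace ℝ (Fin m)) (K : Set (EuclideanSpace ℝ (Fin m)))
    (χ : Set (EuclideanSpace ℝ (Fin n)))
    (p : EuclideanSpace ℝ (Fin n) → ℝ) : ℝ :=
  sInf (p '' {x ∈ χ | A x - b ∈ K})

section PenaltyLagrangian

variable {X F : Type*} [SeminormedAddCommGroup F]

lemma infDist_sub_le_norm {K : Set F} {v : F} (hv : v ∈ K) (w : F) :
    infDist (v - w) K ≤ ‖w‖ := by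
  simpa only [dist_self_sub_left] using infDist_le_dist_of_mem (x := v - w) hv

variable [NormedSpace ℝ F]

lemma penalty_le_of_mem {K : Set F} {μ : ℝ} (hμ : 0 < μ) {v : F} (hv : v ∈ K) (y : F) :
    μ / 2 * infDist (v - μ⁻¹ • y) K ^ 2 ≤ ‖y‖ ^ 2 / (2 * μ) :=
  calc
    μ / 2 * infDist (v - μ⁻¹ • y) K ^ 2 ≤ μ / 2 * ‖μ⁻¹ • y‖ ^ 2 := by
      gcongr
      · exact infDist_nonneg
      · exact infDist_sub_le_norm hv _
    _ = μ / 2 * (μ⁻¹ * ‖y‖) ^ 2 := by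
      rw [norm_smul_of_nonneg (inv_nonneg.mpr hμ.le)]
    _ = ‖y‖ ^ 2 / (2 * μ) := by field_simp

/-- The penalty Lagrangian of the problem of minimizing `p x` subject to `r x ∈ K`, for an arbitrary
constraint map `r` and set `K`. For `r x = A x - b` it unfolds to `Lpen A b K p μ x y`. -/
noncomputable def penaltyLagrangian (r : X → F) (K : Set F) (p : X → ℝ) (μ : ℝ) (x : X) (y : F) :
    ℝ :=
  p x + μ / 2 * infDist (r x - μ⁻¹ • y) K ^ 2 - ‖y‖ ^ 2 / (2 * μ)

variable {r : X → F} {K : Set F} {p : X → ℝ} {μ : ℝ} {x x' : X} {y : F} {ξ : ℝ}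

lemma penaltyLagrangian_le_of_mem (hμ : 0 < μ) (hx : r x ∈ K) :
    penaltyLagrangian r K p μ x y ≤ p x := by
  rw [penaltyLagrangian]
  linarith [penalty_le_of_mem hμ hx y]

theorem stmt_14_general (hμ : 0 < μ) (hx : r x ∈ K)
    (h : penaltyLagrangian r K p μ x' y ≤ penaltyLagrangian r K p μ x y + ξ) :
    p x' + μ / 2 * infDist (r x' - μ⁻¹ • y) K ^ 2 ≤ p x + ξ + ‖y‖ ^ 2 / (2 * μ) ∧
      p x' - p x ≤ ξ + ‖y‖ ^ 2 / (2 * μ) := by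
  have penalized_le : p x' + μ / 2 * infDist (r x' - μ⁻¹ • y) K ^ 2 ≤
      p x + ξ + ‖y‖ ^ 2 / (2 * μ) := by
    have near_optimal : penaltyLagrangian r K p μ x' y ≤ p x + ξ :=
      h.trans (add_le_add_left (penaltyLagrangian_le_of_mem hμ hx) ξ)
    exact sub_le_iff_le_add.mp near_optimal
  have penalty_nonneg : 0 ≤ μ / 2 * infDist (r x' - μ⁻¹ • y) K ^ 2 := by positivity
  exact ⟨penalized_le, by linarith⟩

end PenaltyLagrangian

/-- fix `μ > 0`, `ȳ`, `ξ ≥ 0`, and let `x*` be an optimal solution of (P).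
If `x̄ ∈ χ` satisfies `L_μ(x̄, ȳ) ≤ L_μ(x*, ȳ) + ξ`, then
`p(x̄) + (μ/2)·d_K(Ax̄ - b - ȳ/μ)² ≤ p* + ξ + ‖ȳ‖²/(2μ)`; in particular
`p(x̄) - p* ≤ ξ + ‖ȳ‖²/(2μ)`. -/
theorem stmt_14 {n m : ℕ} (K : Set (EuclideanSpace ℝ (Fin m)))
    (hKne : K.Nonempty) (hKcl : IsClosed K) (hKcv : Convex ℝ K)
    (hKcone : ∀ (c : ℝ), 0 ≤ c → ∀ x ∈ K, c • x ∈ K)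
    (A : EuclideanSpace ℝ (Fin n) →L[ℝ] EuclideanSpace ℝ (Fin m))
    (b : EuclideanSpace ℝ (Fin m))
    (χ : Set (EuclideanSpace ℝ (Fin n)))
    (hχne : χ.Nonempty) (hχcp : IsCompact χ) (hχcv : Convex ℝ χ)
    (p : EuclideanSpace ℝ (Fin n) → ℝ) (hp : ConvexOn ℝ Set.univ p)
    (μ : ℝ) (hμ : 0 < μ) (ybar : EuclideanSpace ℝ (Fin m)) (ξ : ℝ) (hξ : 0 ≤ ξ)
    (xstar : EuclideanSpace ℝ (Fin n)) (hxstarχ : xstar ∈ χ)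
    (hxstarK : A xstar - b ∈ K) (hxstaropt : p xstar = pstar A b K χ p)
    (xbar : EuclideanSpace ℝ (Fin n)) (hxbar : xbar ∈ χ)
    (h : Lpen A b K p μ xbar ybar ≤ Lpen A b K p μ xstar ybar + ξ) :
    p xbar + μ / 2 * (infDist (A xbar - b - μ⁻¹ • ybar) K) ^ 2
        ≤ pstar A b K χ p + ξ + ‖ybar‖ ^ 2 / (2 * μ) ∧
    p xbar - pstar A b K χ p ≤ ξ + ‖ybar‖ ^ 2 / (2 * μ) := by
  rw [← hxstaropt]
  exact stmt_14_general (r := fun x => A x - b) hμ hxstarK h
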